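/- Soundness and completeness of tableaux for the logic of proofs LP (= JT4): for any constant specification CS for LP, an LP-formula A has an LP^e_CS-tableau proof if and only if A is LP_CS-valid. -/

import Mathlib

namespace JLTab

/-- Justification terms: variables, constants, application, sum,
verifier `!`, negative verifier `?`, weak negative verifier `?̄`. -/
inductive Term : Type
  | var : ℕ → Term
  | const : ℕ → Term
  | app : Term → Term → Term
  | sum : Term → Term → Term
  | bang : Term → Term
  | quest : Term → Term
  | qbar : Term → Term
  deriving DecidableEq

/-- JL-formulas: `A ::= p | ⊥ | ¬A | A → A | t:A`. -/
inductive Fml : Type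
  | prop : ℕ → Fml
  | bot : Fml
  | neg : Fml → Fml
  | imp : Fml → Fml → Fml
  | box : Term → Fml → Fml
  deriving DecidableEq

/-- A justification logic JL is J extended by any combination of jT, jD, j4, jB, j5. -/
structure Logic where
  hasT : Bool
  hasD : Bool
  has4 : Bool
  hasB : Bool
  has5 : Bool

/-- The basic justification logic J. -/
def Logic.J : Logic := ⟨false, false, false, false, false⟩

/-- The logic of proofs LP = JT4. -/
def Logic.LP : Logic := ⟨true, false, true, false, false⟩

/-- The logic JT45. -/
def Logic.JT45 : Logic := ⟨true, false, true, false, true⟩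

/-- Propositional evaluation of a formula, treating propositional variables and
formulas `t:A` as atoms. -/
def evalProp (v : Fml → Bool) : Fml → Bool
  | .prop n => v (.prop n)
  | .bot => false
  | .neg A => !(evalProp v A)
  | .imp A B => !(evalProp v A) || evalProp v B
  | .box t A => v (.box t A)

/-- A propositional tautology. -/
def IsTaut (A : Fml) : Prop := ∀ v : Fml → Bool, evalProp v A = true

/-- Axiom instances of the justification logic `L`. -/
inductive Axm (L : Logic) : Fml → Prop
  | taut {A} : IsTaut A → Axm L A
  | sumL {s t A} : Axm L (.imp (.box s A) (.box (.sum s t) A))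
  | sumR {s t A} : Axm L (.imp (.box s A) (.box (.sum t s) A))
  | jK {s t A B} :
      Axm L (.imp (.box s (.imp A B)) (.imp (.box t A) (.box (.app s t) B)))
  | jT {t A} : L.hasT = true → Axm L (.imp (.box t A) A)
  | jD {t} : L.hasD = true → Axm L (.imp (.box t .bot) .bot)
  | j4 {t A} : L.has4 = true → Axm L (.imp (.box t A) (.box (.bang t) (.box t A)))
  | jB {t A} : L.hasB = true →
      Axm L (.imp (.neg A) (.box (.qbar t) (.neg (.box t A))))
  | j5 {t A} : L.has5 = true →
      Axm L (.imp (.neg (.box t A)) (.box (.quest t) (.neg (.box t A))))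

/-- Formulas of the form `c_{i_n} : ⋯ : c_{i_1} : A` (n ≥ 1) with `A` an axiom
instance of `L`; exactly the formulas produced by Iterated Axiom Necessitation. -/
inductive IsIAN (L : Logic) : Fml → Prop
  | base {c A} : Axm L A → IsIAN L (.box (.const c) A)
  | step {c F} : IsIAN L F → IsIAN L (.box (.const c) F)

/-- A constant specification for `L`: a downward closed set of formulas of the
form `c_{i_n} : ⋯ : c_{i_1} : A` with `A` an axiom instance of `L`. -/
structure ConstSpec (L : Logic) where
  set : Set Fml
  mem_ian : ∀ F ∈ set, IsIAN L F
  downward : ∀ c F, Fml.box (Term.const c) F ∈ set → IsIAN L F → F ∈ set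

/-- The Hilbert system JL_CS: axioms of `L`, Modus Ponens, and Iterated Axiom
Necessitation restricted to the constant specification `cs`. -/
inductive Deriv (L : Logic) (cs : ConstSpec L) : Fml → Prop
  | axm {A} : Axm L A → Deriv L cs A
  | mp {A B} : Deriv L cs (.imp A B) → Deriv L cs A → Deriv L cs B
  | ian {F} : F ∈ cs.set → Deriv L cs F

/-- An M-model (Mkrtychev model): an admissible evidence function together with
a valuation of propositional variables. -/
structure MModel where
  ev : Term → Set Fml
  val : ℕ → Prop

/-- Truth in an M-model; `t:A` is true iff `A ∈ E(t)`. -/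
def MModel.sat (M : MModel) : Fml → Prop
  | .prop n => M.val n
  | .bot => False
  | .neg A => ¬ M.sat A
  | .imp A B => M.sat A → M.sat B
  | .box t A => A ∈ M.ev t

/-- `M` is an M-model for JL_CS: conditions E1–E3 always, and E4–E8 according to
the extra axioms of the logic `L`. -/
structure IsModel (L : Logic) (cs : ConstSpec L) (M : MModel) : Prop where
  e1 : ∀ s t A B, Fml.imp A B ∈ M.ev s → A ∈ M.ev t → B ∈ M.ev (.app s t)
  e2l : ∀ s t, M.ev s ⊆ M.ev (.sum s t)
  e2r : ∀ s t, M.ev t ⊆ M.ev (.sum s t)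
  e3 : ∀ c F, Fml.box (.const c) F ∈ cs.set → F ∈ M.ev (.const c)
  e4 : L.hasT = true → ∀ t A, A ∈ M.ev t → M.sat A
  e5 : L.hasD = true → ∀ t, Fml.bot ∉ M.ev t
  e6 : L.has4 = true → ∀ t A, A ∈ M.ev t → Fml.box t A ∈ M.ev (.bang t)
  e7 : L.hasB = true → ∀ t A, ¬ M.sat A → Fml.neg (.box t A) ∈ M.ev (.qbar t)
  e8 : L.has5 = true → ∀ t A, A ∉ M.ev t → Fml.neg (.box t A) ∈ M.ev (.quest t)

/-- `A` is JL_CS-valid: true in every M-model of JL_CS. -/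
def Valid (L : Logic) (cs : ConstSpec L) (A : Fml) : Prop :=
  ∀ M : MModel, IsModel L cs M → M.sat A

/-- `Subf A B`: `A` is a subformula of `B`. -/
inductive Subf : Fml → Fml → Prop
  | refl (A) : Subf A A
  | neg {A B} : Subf A B → Subf A (.neg B)
  | impL {A B C} : Subf A B → Subf A (.imp B C)
  | impR {A C B} : Subf A C → Subf A (.imp B C)
  | box {A B t} : Subf A B → Subf A (.box t B)

/-- `A` is a CS-subformula of the root set `R`: a subformula of a formula in
`R ∪ CS`. -/
def CSSub {L : Logic} (cs : ConstSpec L) (R : Set Fml) (A : Fml) : Prop :=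
  (∃ B ∈ R, Subf A B) ∨ (∃ F ∈ cs.set, Subf A F)

/-- `A` is a weak CS-subformula of the root set `R`: a subformula, or the
negation of a subformula, of a formula in `R ∪ CS`. -/
def WeakCSSub {L : Logic} (cs : ConstSpec L) (R : Set Fml) (A : Fml) : Prop :=
  CSSub cs R A ∨ ∃ C, A = Fml.neg C ∧ CSSub cs R C

/-- `SubTm u t`: `u` is a subterm of `t`. -/
inductive SubTm : Term → Term → Prop
  | refl (t) : SubTm t t
  | appL {u s t} : SubTm u s → SubTm u (.app s t)
  | appR {u s t} : SubTm u t → SubTm u (.app s t)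
  | sumL {u s t} : SubTm u s → SubTm u (.sum s t)
  | sumR {u s t} : SubTm u t → SubTm u (.sum s t)
  | bang {u t} : SubTm u t → SubTm u (.bang t)
  | quest {u t} : SubTm u t → SubTm u (.quest t)
  | qbar {u t} : SubTm u t → SubTm u (.qbar t)

/-- `OccT u A`: the term `u` occurs in the formula `A`. -/
inductive OccT (u : Term) : Fml → Prop
  | neg {A} : OccT u A → OccT u (.neg A)
  | impL {A B} : OccT u A → OccT u (.imp A B)
  | impR {A B} : OccT u B → OccT u (.imp A B)
  | boxT {t A} : SubTm u t → OccT u (.box t A)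
  | boxF {t A} : OccT u A → OccT u (.box t A)

/-- The term `u` occurs in (some formula of) the root set `R`. -/
def OccRoot (R : Set Fml) (u : Term) : Prop := ∃ B ∈ R, OccT u B

/-- Nodes of a tableau: JL-formulas `A`, and evidential formulas
`[t,A]` (`pos`) and `∼[t,A]` (`neg`). -/
inductive Node : Type
  | fml : Fml → Node
  | pos : Term → Fml → Node
  | neg : Term → Fml → Node
  deriving DecidableEq

/-- `TabN L cs pb cut R Γ n`: the branch `Γ` of a tableau with root set `R` has
a closed tableau continuation using `n` rule applications.  The flag `pb`
enables the analytic rules (PB), (PB_e); the flag `cut` enables the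
unrestricted cut rules (cut_f), (cut_e).  The rules (e), (e_⊥), (!), (?̄), (?)
are enabled according to the extra axioms of the logic `L`.  Base cases are the
four branch-closure conditions. -/
inductive TabN (L : Logic) (cs : ConstSpec L) (pb cut : Bool) (R : Set Fml) :
    Set Node → ℕ → Prop
  | closeF {Γ A} : Node.fml A ∈ Γ → Node.fml (.neg A) ∈ Γ → TabN L cs pb cut R Γ 0
  | closeE {Γ t A} : Node.pos t A ∈ Γ → Node.neg t A ∈ Γ → TabN L cs pb cut R Γ 0
  | closeBot {Γ} : Node.fml .bot ∈ Γ → TabN L cs pb cut R Γ 0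
  | closeCS {Γ c F} : Fml.box (.const c) F ∈ cs.set →
      Node.fml (.neg (.box (.const c) F)) ∈ Γ → TabN L cs pb cut R Γ 0
  | fNeg {Γ A n} : Node.fml (.neg (.neg A)) ∈ Γ →
      TabN L cs pb cut R (insert (Node.fml A) Γ) n → TabN L cs pb cut R Γ (n + 1)
  | fImp {Γ A B n} : Node.fml (.neg (.imp A B)) ∈ Γ →
      TabN L cs pb cut R (insert (Node.fml A) (insert (Node.fml (.neg B)) Γ)) n →
      TabN L cs pb cut R Γ (n + 1)
  | tImp {Γ A B m n} : Node.fml (.imp A B) ∈ Γ →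
      TabN L cs pb cut R (insert (Node.fml (.neg A)) Γ) m →
      TabN L cs pb cut R (insert (Node.fml B) Γ) n →
      TabN L cs pb cut R Γ (m + n + 1)
  | te {Γ t A n} : Node.fml (.box t A) ∈ Γ →
      TabN L cs pb cut R (insert (Node.pos t A) Γ) n → TabN L cs pb cut R Γ (n + 1)
  | fe {Γ t A n} : Node.fml (.neg (.box t A)) ∈ Γ →
      TabN L cs pb cut R (insert (Node.neg t A) Γ) n → TabN L cs pb cut R Γ (n + 1)
  | plusL {Γ t s A n} : Node.neg (.sum t s) A ∈ Γ →
      TabN L cs pb cut R (insert (Node.neg t A) Γ) n → TabN L cs pb cut R Γ (n + 1)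
  | plusR {Γ t s A n} : Node.neg (.sum t s) A ∈ Γ →
      TabN L cs pb cut R (insert (Node.neg s A) Γ) n → TabN L cs pb cut R Γ (n + 1)
  | appR {Γ s t A B n} : Node.pos s (.imp A B) ∈ Γ → Node.pos t A ∈ Γ →
      CSSub cs R (.imp A B) → OccRoot R (.app s t) →
      TabN L cs pb cut R (insert (Node.pos (.app s t) B) Γ) n →
      TabN L cs pb cut R Γ (n + 1)
  | rulePB {Γ A m n} : pb = true → CSSub cs R A →
      TabN L cs pb cut R (insert (Node.fml A) Γ) m →
      TabN L cs pb cut R (insert (Node.fml (.neg A)) Γ) n →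
      TabN L cs pb cut R Γ (m + n + 1)
  | rulePBe {Γ t A m n} : pb = true → CSSub cs R A → OccRoot R t →
      TabN L cs pb cut R (insert (Node.pos t A) Γ) m →
      TabN L cs pb cut R (insert (Node.neg t A) Γ) n →
      TabN L cs pb cut R Γ (m + n + 1)
  | cutF {Γ A m n} : cut = true →
      TabN L cs pb cut R (insert (Node.fml A) Γ) m →
      TabN L cs pb cut R (insert (Node.fml (.neg A)) Γ) n →
      TabN L cs pb cut R Γ (m + n + 1)
  | cutE {Γ t A m n} : cut = true →
      TabN L cs pb cut R (insert (Node.pos t A) Γ) m →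
      TabN L cs pb cut R (insert (Node.neg t A) Γ) n →
      TabN L cs pb cut R Γ (m + n + 1)
  | ruleT {Γ t A n} : L.hasT = true → Node.pos t A ∈ Γ →
      TabN L cs pb cut R (insert (Node.fml A) Γ) n → TabN L cs pb cut R Γ (n + 1)
  | ruleD {Γ t n} : L.hasD = true → Node.pos t .bot ∈ Γ →
      TabN L cs pb cut R (insert (Node.fml .bot) Γ) n → TabN L cs pb cut R Γ (n + 1)
  | rule4 {Γ t A n} : L.has4 = true → Node.neg (.bang t) (.box t A) ∈ Γ →
      TabN L cs pb cut R (insert (Node.neg t A) Γ) n → TabN L cs pb cut R Γ (n + 1)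
  | ruleB {Γ t A n} : L.hasB = true → Node.neg (.qbar t) (.neg (.box t A)) ∈ Γ →
      TabN L cs pb cut R (insert (Node.fml A) Γ) n → TabN L cs pb cut R Γ (n + 1)
  | rule5 {Γ t A n} : L.has5 = true → Node.neg (.quest t) (.neg (.box t A)) ∈ Γ →
      TabN L cs pb cut R (insert (Node.pos t A) Γ) n → TabN L cs pb cut R Γ (n + 1)

/-- There is a closed tableau below the branch `Γ` (root set `R`). -/
def Tab (L : Logic) (cs : ConstSpec L) (pb cut : Bool) (R : Set Fml)
    (Γ : Set Node) : Prop :=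
  ∃ n, TabN L cs pb cut R Γ n

/-- A tableau proof of `A`: a closed tableau whose root is `¬A`. -/
def TabProof (L : Logic) (cs : ConstSpec L) (pb cut : Bool) (A : Fml) : Prop :=
  Tab L cs pb cut {Fml.neg A} {Node.fml (Fml.neg A)}

/-- A single application of a JL^e_CS-tableau rule to the branch `Γ` (root set
`R`), producing the list of extended branches (one for a non-branching rule,
two for a branching rule). -/
inductive RuleApp (L : Logic) (cs : ConstSpec L) (R : Set Fml) (Γ : Set Node) :
    List (Set Node) → Prop
  | fNeg {A} : Node.fml (.neg (.neg A)) ∈ Γ →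
      RuleApp L cs R Γ [insert (Node.fml A) Γ]
  | fImp {A B} : Node.fml (.neg (.imp A B)) ∈ Γ →
      RuleApp L cs R Γ [insert (Node.fml A) (insert (Node.fml (.neg B)) Γ)]
  | tImp {A B} : Node.fml (.imp A B) ∈ Γ →
      RuleApp L cs R Γ [insert (Node.fml (.neg A)) Γ, insert (Node.fml B) Γ]
  | te {t A} : Node.fml (.box t A) ∈ Γ → RuleApp L cs R Γ [insert (Node.pos t A) Γ]
  | fe {t A} : Node.fml (.neg (.box t A)) ∈ Γ →
      RuleApp L cs R Γ [insert (Node.neg t A) Γ]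
  | plusL {t s A} : Node.neg (.sum t s) A ∈ Γ →
      RuleApp L cs R Γ [insert (Node.neg t A) Γ]
  | plusR {t s A} : Node.neg (.sum t s) A ∈ Γ →
      RuleApp L cs R Γ [insert (Node.neg s A) Γ]
  | appR {s t A B} : Node.pos s (.imp A B) ∈ Γ → Node.pos t A ∈ Γ →
      CSSub cs R (.imp A B) → OccRoot R (.app s t) →
      RuleApp L cs R Γ [insert (Node.pos (.app s t) B) Γ]
  | rulePB {A} : CSSub cs R A →
      RuleApp L cs R Γ [insert (Node.fml A) Γ, insert (Node.fml (.neg A)) Γ]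
  | rulePBe {t A} : CSSub cs R A → OccRoot R t →
      RuleApp L cs R Γ [insert (Node.pos t A) Γ, insert (Node.neg t A) Γ]
  | ruleT {t A} : L.hasT = true → Node.pos t A ∈ Γ →
      RuleApp L cs R Γ [insert (Node.fml A) Γ]
  | ruleD {t} : L.hasD = true → Node.pos t .bot ∈ Γ →
      RuleApp L cs R Γ [insert (Node.fml .bot) Γ]
  | rule4 {t A} : L.has4 = true → Node.neg (.bang t) (.box t A) ∈ Γ →
      RuleApp L cs R Γ [insert (Node.neg t A) Γ]
  | ruleB {t A} : L.hasB = true → Node.neg (.qbar t) (.neg (.box t A)) ∈ Γ →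
      RuleApp L cs R Γ [insert (Node.fml A) Γ]
  | rule5 {t A} : L.has5 = true → Node.neg (.quest t) (.neg (.box t A)) ∈ Γ →
      RuleApp L cs R Γ [insert (Node.pos t A) Γ]

/-- Satisfaction of tableau nodes in an M-model: `M` satisfies `[t,A]` iff
`A ∈ E(t)`, and satisfies `∼[t,A]` iff `A ∉ E(t)`. -/
def NodeSat (M : MModel) : Node → Prop
  | .fml A => M.sat A
  | .pos t A => A ∈ M.ev t
  | .neg t A => A ∉ M.ev t

/-- Branches reachable from the initial branch by tableau rule applications. -/
inductive Reach (L : Logic) (cs : ConstSpec L) (R : Set Fml) :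
    Set Node → Set Node → Prop
  | refl (Γ) : Reach L cs R Γ Γ
  | step {Γ Γ' Γ'' exts} : Reach L cs R Γ Γ' → RuleApp L cs R Γ' exts →
      Γ'' ∈ exts → Reach L cs R Γ Γ''

/-- One non-redundant tableau construction step: a rule application properly
extending the branch. -/
def Step (L : Logic) (cs : ConstSpec L) (R : Set Fml) (Γ Γ' : Set Node) : Prop :=
  ∃ exts, RuleApp L cs R Γ exts ∧ Γ' ∈ exts ∧ Γ ⊂ Γ'

/-- The term is in the language of the logic `L` (which contains those
operations occurring in the axioms of `L`). -/
def TermInLang (L : Logic) : Term → Prop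
  | .var _ => True
  | .const _ => True
  | .app s t => TermInLang L s ∧ TermInLang L t
  | .sum s t => TermInLang L s ∧ TermInLang L t
  | .bang t => L.has4 = true ∧ TermInLang L t
  | .quest t => L.has5 = true ∧ TermInLang L t
  | .qbar t => L.hasB = true ∧ TermInLang L t

/-- The formula is in the language of the logic `L`. -/
def FmlInLang (L : Logic) : Fml → Prop
  | .prop _ => True
  | .bot => True
  | .neg A => FmlInLang L A
  | .imp A B => FmlInLang L A ∧ FmlInLang L B
  | .box t A => TermInLang L t ∧ FmlInLang L A

/-- The initial branch of a tableau for a finite set `S` of formulas. -/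
def branchOf (S : Finset Fml) : Set Node := Node.fml '' (↑S : Set Fml)

end JLTab

namespace JLTab

/-- Soundness: a branch all of whose nodes hold in a model has no closed tableau. -/
theorem sound_aux (cs : ConstSpec Logic.LP) (R : Set Fml) (M : MModel)
    (hM : IsModel Logic.LP cs M) {Γ : Set Node} {n : ℕ}
    (h : TabN Logic.LP cs true false R Γ n) : ¬ ∀ x ∈ Γ, NodeSat M x := by
  induction h with
  | closeF h1 h2 => intro H; exact (H _ h2) (H _ h1)
  | closeE h1 h2 => intro H; exact (H _ h2) (H _ h1)
  | closeBot h1 => intro H; exact H _ h1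
  | closeCS h1 h2 => intro H; exact (H _ h2) (hM.e3 _ _ h1)
  | fNeg h1 _ ih =>
    intro H; apply ih
    rintro x (rfl | hx)
    · exact not_not.mp (H _ h1)
    · exact H x hx
  | fImp h1 _ ih =>
    intro H; apply ih
    have := H _ h1
    simp only [NodeSat, MModel.sat, Classical.not_imp] at this
    rintro x (rfl | rfl | hx)
    · exact this.1
    · exact this.2
    · exact H x hx
  | @tImp Γ A B m n h1 _ _ ih1 ih2 =>
    intro H
    have h3 : M.sat A → M.sat B := H _ h1
    by_cases hA : M.sat A
    · apply ih2
      rintro x (rfl | hx)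
      · exact h3 hA
      · exact H x hx
    · apply ih1
      rintro x (rfl | hx)
      · exact hA
      · exact H x hx
  | te h1 _ ih =>
    intro H; apply ih
    rintro x (rfl | hx)
    · exact (H _ h1 :)
    · exact H x hx
  | fe h1 _ ih =>
    intro H; apply ih
    rintro x (rfl | hx)
    · exact (H _ h1 :)
    · exact H x hx
  | plusL h1 _ ih =>
    intro H; apply ih
    rintro x (rfl | hx)
    · exact fun h => H _ h1 (hM.e2l _ _ h)
    · exact H x hx
  | plusR h1 _ ih =>
    intro H; apply ih
    rintro x (rfl | hx)
    · exact fun h => H _ h1 (hM.e2r _ _ h)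
    · exact H x hx
  | appR h1 h2 _ _ _ ih =>
    intro H; apply ih
    rintro x (rfl | hx)
    · exact hM.e1 _ _ _ _ (H _ h1) (H _ h2)
    · exact H x hx
  | @rulePB Γ A m n _ _ _ _ ih1 ih2 =>
    intro H
    by_cases hA : M.sat A
    · apply ih1
      rintro x (rfl | hx)
      · exact hA
      · exact H x hx
    · apply ih2
      rintro x (rfl | hx)
      · exact hA
      · exact H x hx
  | @rulePBe Γ t A m n _ _ _ _ _ ih1 ih2 =>
    intro H
    by_cases hA : A ∈ M.ev t
    · apply ih1
      rintro x (rfl | hx)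
      · exact hA
      · exact H x hx
    · apply ih2
      rintro x (rfl | hx)
      · exact hA
      · exact H x hx
  | cutF h => cases h
  | cutE h => cases h
  | ruleT h0 h1 _ ih =>
    intro H; apply ih
    rintro x (rfl | hx)
    · exact hM.e4 h0 _ _ (H _ h1)
    · exact H x hx
  | ruleD h => cases h
  | rule4 h0 h1 _ ih =>
    intro H; apply ih
    rintro x (rfl | hx)
    · exact fun h => H _ h1 (hM.e6 h0 _ _ h)
    · exact H x hx
  | ruleB h => cases h
  | rule5 h => cases h

/-- `Γ` has a closed tableau. -/
abbrev TT (cs : ConstSpec Logic.LP) (R : Set Fml) (Γ : Set Node) : Prop :=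
  Tab Logic.LP cs true false R Γ

/-- Finitely supported closedness. -/
def FinSupp (P : Set Node → Prop) (Γ : Set Node) : Prop :=
  ∃ S : Set Node, S.Finite ∧ S ⊆ Γ ∧ ∀ Δ, S ⊆ Δ → P Δ

theorem FinSupp.ins {P : Set Node → Prop} {Γ : Set Node} {x : Node}
    (h : FinSupp P (insert x Γ)) : FinSupp (fun Δ => P (insert x Δ)) Γ := by
  obtain ⟨S, hf, hs, hp⟩ := h
  refine ⟨S \ {x}, hf.subset Set.sdiff_subset, ?_, fun Δ hΔ => hp _ ?_⟩
  · rintro y ⟨hy, hne⟩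
    exact (hs hy).resolve_left hne
  · intro y hy
    by_cases hyx : y = x
    · exact Or.inl hyx
    · exact Or.inr (hΔ ⟨hy, hyx⟩)

theorem FinSupp.mem {Γ : Set Node} {x : Node} (h : x ∈ Γ) : FinSupp (fun Δ => x ∈ Δ) Γ :=
  ⟨{x}, Set.finite_singleton x, by simpa using h, fun Δ hΔ => hΔ rfl⟩

theorem FinSupp.map {P Q : Set Node → Prop} {Γ : Set Node} (h : FinSupp P Γ)
    (hh : ∀ Δ, P Δ → Q Δ) : FinSupp Q Γ := by
  obtain ⟨S, hf, hs, hp⟩ := h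
  exact ⟨S, hf, hs, fun Δ hΔ => hh _ (hp _ hΔ)⟩

theorem FinSupp.map2 {P Q U : Set Node → Prop} {Γ : Set Node} (h : FinSupp P Γ) (h' : FinSupp Q Γ)
    (hh : ∀ Δ, P Δ → Q Δ → U Δ) : FinSupp U Γ := by
  obtain ⟨S, hf, hs, hp⟩ := h
  obtain ⟨S', hf', hs', hp'⟩ := h'
  exact ⟨S ∪ S', hf.union hf', Set.union_subset hs hs', fun Δ hΔ =>
    hh _ (hp _ (Set.subset_union_left.trans hΔ)) (hp' _ (Set.subset_union_right.trans hΔ))⟩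

theorem compact (cs : ConstSpec Logic.LP) (R : Set Fml) {Γ : Set Node} {n : ℕ}
    (h : TabN Logic.LP cs true false R Γ n) : FinSupp (TT cs R) Γ := by
  induction h with
  | closeF h1 h2 => exact (FinSupp.mem h1).map2 (FinSupp.mem h2) fun Δ a b => ⟨_, .closeF a b⟩
  | closeE h1 h2 => exact (FinSupp.mem h1).map2 (FinSupp.mem h2) fun Δ a b => ⟨_, .closeE a b⟩
  | closeBot h1 => exact (FinSupp.mem h1).map fun Δ a => ⟨_, .closeBot a⟩
  | closeCS h1 h2 => exact (FinSupp.mem h2).map fun Δ a => ⟨_, .closeCS h1 a⟩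
  | fNeg h1 _ ih => exact (FinSupp.mem h1).map2 ih.ins fun Δ a ⟨_, b⟩ => ⟨_, .fNeg a b⟩
  | fImp h1 _ ih =>
    exact (FinSupp.mem h1).map2 (FinSupp.ins (P := fun Δ => TT cs R (insert _ Δ)) ih.ins)
      fun Δ a ⟨_, b⟩ => ⟨_, .fImp a b⟩
  | tImp h1 _ _ ih1 ih2 =>
    exact (FinSupp.mem h1).map2 (ih1.ins.map2 ih2.ins fun _ a b => And.intro a b)
      fun Δ a ⟨⟨_, b⟩, ⟨_, c⟩⟩ => ⟨_, .tImp a b c⟩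
  | te h1 _ ih => exact (FinSupp.mem h1).map2 ih.ins fun Δ a ⟨_, b⟩ => ⟨_, .te a b⟩
  | fe h1 _ ih => exact (FinSupp.mem h1).map2 ih.ins fun Δ a ⟨_, b⟩ => ⟨_, .fe a b⟩
  | plusL h1 _ ih => exact (FinSupp.mem h1).map2 ih.ins fun Δ a ⟨_, b⟩ => ⟨_, .plusL a b⟩
  | plusR h1 _ ih => exact (FinSupp.mem h1).map2 ih.ins fun Δ a ⟨_, b⟩ => ⟨_, .plusR a b⟩
  | appR h1 h2 h3 h4 _ ih =>
    exact (FinSupp.mem h1).map2 ((FinSupp.mem h2).map2 ih.ins fun _ a b => And.intro a b)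
      fun Δ a ⟨b, ⟨_, c⟩⟩ => ⟨_, .appR a b h3 h4 c⟩
  | rulePB h0 h1 _ _ ih1 ih2 =>
    exact ih1.ins.map2 ih2.ins fun Δ ⟨_, a⟩ ⟨_, b⟩ => ⟨_, .rulePB h0 h1 a b⟩
  | rulePBe h0 h1 h2 _ _ ih1 ih2 =>
    exact ih1.ins.map2 ih2.ins fun Δ ⟨_, a⟩ ⟨_, b⟩ => ⟨_, .rulePBe h0 h1 h2 a b⟩
  | cutF h => cases h
  | cutE h => cases h
  | ruleT h0 h1 _ ih => exact (FinSupp.mem h1).map2 ih.ins fun Δ a ⟨_, b⟩ => ⟨_, .ruleT h0 a b⟩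
  | ruleD h => cases h
  | rule4 h0 h1 _ ih => exact (FinSupp.mem h1).map2 ih.ins fun Δ a ⟨_, b⟩ => ⟨_, .rule4 h0 a b⟩
  | ruleB h => cases h
  | rule5 h => cases h

theorem exists_max (cs : ConstSpec Logic.LP) (R : Set Fml) (Γ₀ : Set Node)
    (h : ¬ TT cs R Γ₀) :
    ∃ Γ, Γ₀ ⊆ Γ ∧ ¬ TT cs R Γ ∧ ∀ x, ¬ TT cs R (insert x Γ) → x ∈ Γ := by
  obtain ⟨Γ, hsub, hmax⟩ := zorn_subset_nonempty {Γ | ¬ TT cs R Γ} (by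
    intro c hc hch hne
    refine ⟨⋃₀ c, ?_, fun s hs => Set.subset_sUnion_of_mem hs⟩
    rintro ⟨n, hn⟩
    obtain ⟨S, hf, hs, hp⟩ := compact cs R hn
    obtain ⟨s, hs1, hs2⟩ := DirectedOn.exists_mem_subset_of_finite_of_subset_sUnion hne
      hch.directedOn hf hs
    exact hc hs1 (hp _ hs2)) Γ₀ h
  refine ⟨Γ, hsub, hmax.prop, fun x hx => ?_⟩
  exact hmax.le_of_ge hx (Set.subset_insert _ _) (Set.mem_insert _ _)

/-- The evidence generated by the branch. -/
inductive E0 (cs : ConstSpec Logic.LP) (R : Set Fml) (Γ : Set Node) : Term → Fml → Prop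
  | base {t B} : Node.pos t B ∈ Γ → CSSub cs R B → E0 cs R Γ t B
  | app {s t A B} : E0 cs R Γ s (.imp A B) → E0 cs R Γ t A → E0 cs R Γ (.app s t) B
  | sumL {s t A} : E0 cs R Γ s A → E0 cs R Γ (.sum s t) A
  | sumR {s t A} : E0 cs R Γ t A → E0 cs R Γ (.sum s t) A
  | bang {t A} : E0 cs R Γ t A → E0 cs R Γ (.bang t) (.box t A)

/-- Truth: `t:B` holds iff it is generated and `B` holds. -/
def ww (E : Term → Fml → Prop) (v : ℕ → Prop) : Fml → Prop
  | .prop n => v n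
  | .bot => False
  | .neg A => ¬ ww E v A
  | .imp A B => ww E v A → ww E v B
  | .box t A => E t A ∧ ww E v A

/-- The model built from `ww`. -/
def wM (E : Term → Fml → Prop) (v : ℕ → Prop) : MModel :=
  ⟨fun t => {B | E t B ∧ ww E v B}, v⟩

theorem wM_sat (E : Term → Fml → Prop) (v : ℕ → Prop) (B : Fml) :
    (wM E v).sat B ↔ ww E v B := by
  induction B with
  | prop n => rfl
  | bot => rfl
  | neg A ih => simp only [MModel.sat, ww, ih]
  | imp A B ih1 ih2 => simp only [MModel.sat, ww, ih1, ih2]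
  | box t A ih => rfl

theorem subf_trans {A B C : Fml} (h1 : Subf A B) (h2 : Subf B C) : Subf A C := by
  induction h2 with
  | refl => exact h1
  | neg _ ih => exact .neg ih
  | impL _ ih => exact .impL ih
  | impR _ ih => exact .impR ih
  | box _ ih => exact .box ih

theorem CSSub.sub {cs : ConstSpec Logic.LP} {R : Set Fml} {A B : Fml}
    (h : CSSub cs R B) (hs : Subf A B) : CSSub cs R A := by
  rcases h with ⟨C, hC, h⟩ | ⟨C, hC, h⟩
  · exact Or.inl ⟨C, hC, subf_trans hs h⟩
  · exact Or.inr ⟨C, hC, subf_trans hs h⟩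

theorem subTm_trans {s t u : Term} (h1 : SubTm s t) (h2 : SubTm t u) : SubTm s u := by
  induction h2 with
  | refl => exact h1
  | appL _ ih => exact .appL ih
  | appR _ ih => exact .appR ih
  | sumL _ ih => exact .sumL ih
  | sumR _ ih => exact .sumR ih
  | bang _ ih => exact .bang ih
  | quest _ ih => exact .quest ih
  | qbar _ ih => exact .qbar ih

theorem OccT.sub {s t : Term} {A : Fml} (hs : SubTm s t) (h : OccT t A) : OccT s A := by
  induction h with
  | neg _ ih => exact .neg ih
  | impL _ ih => exact .impL ih
  | impR _ ih => exact .impR ih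
  | boxT h => exact .boxT (subTm_trans hs h)
  | boxF _ ih => exact .boxF ih

theorem OccRoot.sub {R : Set Fml} {s t : Term} (h : OccRoot R t) (hs : SubTm s t) :
    OccRoot R s := by
  obtain ⟨B, hB, h⟩ := h
  exact ⟨B, hB, h.sub hs⟩

theorem occ_of_subf {t : Term} {A B : Fml} (h : Subf A B) (ho : OccT t A) : OccT t B := by
  induction h with
  | refl => exact ho
  | neg _ ih => exact .neg ih
  | impL _ ih => exact .impL ih
  | impR _ ih => exact .impR ih
  | box _ ih => exact .boxF ih

theorem evalProp_ww (E : Term → Fml → Prop) (v : ℕ → Prop) (b : Fml → Bool)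
    (hb : ∀ A, b A = true ↔ ww E v A) (A : Fml) :
    evalProp b A = true ↔ ww E v A := by
  induction A with
  | prop n => exact hb _
  | bot => simp [evalProp, ww]
  | neg A ih => simp only [evalProp, ww, ← ih]; simp
  | imp A B ih1 ih2 =>
    simp only [evalProp, ww, ← ih1, ← ih2]
    cases evalProp b A <;> simp
  | box t A ih => exact hb _

section
variable {cs : ConstSpec Logic.LP} {R : Set Fml} {Γ : Set Node}

theorem axm_ww (v : ℕ → Prop) {A : Fml} (h : Axm Logic.LP A) : ww (E0 cs R Γ) v A := by
  classical
  cases h with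
  | taut h =>
    exact (evalProp_ww _ v (fun A => decide (ww (E0 cs R Γ) v A)) (by simp) A).1 (h _)
  | sumL => exact fun h => ⟨.sumL h.1, h.2⟩
  | sumR => exact fun h => ⟨.sumR h.1, h.2⟩
  | jK => exact fun h h' => ⟨.app h.1 h'.1, h.2 h'.2⟩
  | jT => exact fun h => h.2
  | jD h => cases h
  | j4 => exact fun h => ⟨.bang h.1, h⟩
  | jB h => cases h
  | j5 h => cases h

theorem pb_mem (hΓ : ¬ TT cs R Γ) (hm : ∀ x, ¬ TT cs R (insert x Γ) → x ∈ Γ)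
    {A : Fml} (hA : CSSub cs R A) : Node.fml A ∈ Γ ∨ Node.fml (.neg A) ∈ Γ := by
  by_contra h
  push Not at h
  obtain ⟨m, h1⟩ := not_imp_comm.1 (hm _) h.1
  obtain ⟨n, h2⟩ := not_imp_comm.1 (hm _) h.2
  exact hΓ ⟨_, .rulePB rfl hA h1 h2⟩

theorem pbe_mem (hΓ : ¬ TT cs R Γ) (hm : ∀ x, ¬ TT cs R (insert x Γ) → x ∈ Γ)
    {t : Term} {A : Fml} (hA : CSSub cs R A) (ht : OccRoot R t) :
    Node.pos t A ∈ Γ ∨ Node.neg t A ∈ Γ := by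
  by_contra h
  push Not at h
  obtain ⟨m, h1⟩ := not_imp_comm.1 (hm _) h.1
  obtain ⟨n, h2⟩ := not_imp_comm.1 (hm _) h.2
  exact hΓ ⟨_, .rulePBe rfl hA ht h1 h2⟩

theorem te_mem (hΓ : ¬ TT cs R Γ) (hm : ∀ x, ¬ TT cs R (insert x Γ) → x ∈ Γ)
    {t : Term} {A : Fml} (h : Node.fml (.box t A) ∈ Γ) : Node.pos t A ∈ Γ :=
  hm _ fun ⟨_, k⟩ => hΓ ⟨_, .te h k⟩

theorem cs_E0 (hΓ : ¬ TT cs R Γ) (hm : ∀ x, ¬ TT cs R (insert x Γ) → x ∈ Γ)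
    {c : ℕ} {F : Fml} (h : Fml.box (.const c) F ∈ cs.set) :
    E0 cs R Γ (.const c) F := by
  have hs : CSSub cs R (.box (.const c) F) := Or.inr ⟨_, h, .refl _⟩
  refine .base (te_mem hΓ hm ?_) (hs.sub (.box (.refl _)))
  exact (pb_mem hΓ hm hs).resolve_right fun k => hΓ ⟨_, .closeCS h k⟩

theorem cs_ww (hΓ : ¬ TT cs R Γ) (hm : ∀ x, ¬ TT cs R (insert x Γ) → x ∈ Γ)
    (v : ℕ → Prop) {F : Fml} (hi : IsIAN Logic.LP F) (h : F ∈ cs.set) :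
    ww (E0 cs R Γ) v F := by
  induction hi with
  | base ha => exact ⟨cs_E0 hΓ hm h, axm_ww v ha⟩
  | step hi ih => exact ⟨cs_E0 hΓ hm h, ih (cs.downward _ _ h hi)⟩

theorem isModel (hΓ : ¬ TT cs R Γ) (hm : ∀ x, ¬ TT cs R (insert x Γ) → x ∈ Γ)
    (v : ℕ → Prop) : IsModel Logic.LP cs (wM (E0 cs R Γ) v) where
  e1 s t A B h h' := ⟨.app h.1 h'.1, h.2 h'.2⟩
  e2l s t A h := ⟨.sumL h.1, h.2⟩
  e2r s t A h := ⟨.sumR h.1, h.2⟩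
  e3 c F h := cs_ww hΓ hm v (cs.mem_ian _ h) h
  e4 _ t A h := (wM_sat _ _ _).2 h.2
  e5 h := by cases h
  e6 _ t A h := ⟨.bang h.1, h⟩
  e7 h := by cases h
  e8 h := by cases h

theorem E0_mem (hΓ : ¬ TT cs R Γ) (hm : ∀ x, ¬ TT cs R (insert x Γ) → x ∈ Γ)
    {t : Term} {B : Fml} (h : E0 cs R Γ t B) :
    OccRoot R t → (CSSub cs R B → Node.pos t B ∈ Γ) ∧
      (∀ C D, B = .imp C D → CSSub cs R B) := by
  induction h with
  | base h1 h2 => exact fun _ => ⟨fun _ => h1, fun _ _ _ => h2⟩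
  | @app s t A B _ _ ih1 ih2 =>
    intro ho
    obtain ⟨a1, a2⟩ := ih1 (ho.sub (.appL (.refl _)))
    obtain ⟨b1, b2⟩ := ih2 (ho.sub (.appR (.refl _)))
    have hc := a2 _ _ rfl
    refine ⟨fun _ => hm _ fun ⟨_, k⟩ => hΓ ⟨_, .appR (a1 hc) (b1 (hc.sub (.impL (.refl _))))
      hc ho k⟩, fun _ _ _ => hc.sub (.impR (.refl _))⟩
  | sumL _ ih =>
    intro ho
    obtain ⟨a1, a2⟩ := ih (ho.sub (.sumL (.refl _)))
    refine ⟨fun hc => (pbe_mem hΓ hm hc ho).resolve_right fun k => ?_, a2⟩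
    exact hΓ ⟨_, .closeE (a1 hc) (hm _ fun ⟨_, k'⟩ => hΓ ⟨_, .plusL k k'⟩)⟩
  | sumR _ ih =>
    intro ho
    obtain ⟨a1, a2⟩ := ih (ho.sub (.sumR (.refl _)))
    refine ⟨fun hc => (pbe_mem hΓ hm hc ho).resolve_right fun k => ?_, a2⟩
    exact hΓ ⟨_, .closeE (a1 hc) (hm _ fun ⟨_, k'⟩ => hΓ ⟨_, .plusR k k'⟩)⟩
  | bang _ ih =>
    intro ho
    obtain ⟨a1, a2⟩ := ih (ho.sub (.bang (.refl _)))
    refine ⟨fun hc => (pbe_mem hΓ hm hc ho).resolve_right fun k => ?_, by simp⟩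
    exact hΓ ⟨_, .closeE (a1 (hc.sub (.box (.refl _))))
      (hm _ fun ⟨_, k'⟩ => hΓ ⟨_, .rule4 rfl k k'⟩)⟩

theorem truth (hΓ : ¬ TT cs R Γ) (hm : ∀ x, ¬ TT cs R (insert x Γ) → x ∈ Γ)
    (B : Fml) : (∃ D ∈ R, Subf B D) →
    (Node.fml B ∈ Γ → ww (E0 cs R Γ) (fun n => Node.fml (.prop n) ∈ Γ) B) ∧
    (Node.fml (.neg B) ∈ Γ → ¬ ww (E0 cs R Γ) (fun n => Node.fml (.prop n) ∈ Γ) B) := by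
  induction B with
  | prop n => exact fun _ => ⟨fun h => h, fun h h' => hΓ ⟨_, .closeF h' h⟩⟩
  | bot => exact fun _ => ⟨fun h => hΓ ⟨_, .closeBot h⟩, fun _ h => h⟩
  | neg A ih =>
    rintro ⟨D, hD, hs⟩
    obtain ⟨i1, i2⟩ := ih ⟨D, hD, subf_trans (.neg (.refl _)) hs⟩
    exact ⟨i2, fun h h' => h' (i1 (hm _ fun ⟨_, k⟩ => hΓ ⟨_, .fNeg h k⟩))⟩
  | imp A B ihA ihB =>
    rintro ⟨D, hD, hs⟩
    have hsA := subf_trans (.impL (.refl _)) hs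
    have hsB := subf_trans (.impR (.refl _)) hs
    obtain ⟨a1, a2⟩ := ihA ⟨D, hD, hsA⟩
    obtain ⟨b1, b2⟩ := ihB ⟨D, hD, hsB⟩
    have pA := pb_mem hΓ hm (Or.inl ⟨D, hD, hsA⟩ : CSSub cs R A)
    have pB := pb_mem hΓ hm (Or.inl ⟨D, hD, hsB⟩ : CSSub cs R B)
    constructor
    · intro h hA
      rcases pB with hB | hB
      · exact b1 hB
      rcases pA with hA' | hA'
      · exfalso
        exact hΓ ⟨_, .tImp h (.closeF (Or.inr hA') (Or.inl rfl))
          (.closeF (Or.inl rfl) (Or.inr hB))⟩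
      · exact absurd hA (a2 hA')
    · intro h hAB
      have hA : Node.fml A ∈ Γ := by
        refine pA.resolve_right fun k => hΓ ⟨_, .fImp h (.closeF (A := A) (Or.inl rfl) ?_)⟩
        exact Or.inr (Or.inr k)
      have hB : Node.fml (.neg B) ∈ Γ := by
        refine pB.resolve_left fun k => hΓ ⟨_, .fImp h (.closeF (A := B) ?_ ?_)⟩
        · exact Or.inr (Or.inr k)
        · exact Or.inr (Or.inl rfl)
      exact b2 hB (hAB (a1 hA))
  | box t A ih =>
    rintro ⟨D, hD, hs⟩
    have hsA := subf_trans (.box (.refl _)) hs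
    obtain ⟨i1, i2⟩ := ih ⟨D, hD, hsA⟩
    have hc : CSSub cs R A := Or.inl ⟨D, hD, hsA⟩
    constructor
    · intro h
      have hp := te_mem hΓ hm h
      exact ⟨.base hp hc, i1 (hm _ fun ⟨_, k⟩ => hΓ ⟨_, .ruleT rfl hp k⟩)⟩
    · intro h h'
      have hn : Node.neg t A ∈ Γ := hm _ fun ⟨_, k⟩ => hΓ ⟨_, .fe h k⟩
      have ho : OccRoot R t := ⟨D, hD, occ_of_subf hs (.boxT (.refl _))⟩
      exact hΓ ⟨_, .closeE ((E0_mem hΓ hm h'.1 ho).1 hc) hn⟩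

end

end JLTab

/-- soundness and completeness of the analytic tableaux for the
logic of proofs LP = JT4: an LP-formula A has an LP^e_CS-tableau proof iff A is
LP_CS-valid. -/
theorem JLTab.LP_tableau_sound_complete (cs : ConstSpec Logic.LP) (A : Fml)
    (hA : FmlInLang Logic.LP A) :
    TabProof Logic.LP cs true false A ↔ Valid Logic.LP cs A := by
  constructor
  · rintro ⟨n, hn⟩ M hM
    by_contra hc
    exact sound_aux cs _ M hM hn (by rintro x rfl; exact hc)
  · intro hv
    by_contra hc
    obtain ⟨Γ, h0, hΓ, hm⟩ := exists_max cs _ _ hc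
    have ht := (truth hΓ hm A ⟨_, rfl, .neg (.refl _)⟩).2 (h0 rfl)
    exact ht ((wM_sat _ _ _).1 (hv _ (isModel hΓ hm _)))
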